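/- Let σ > 0 and let d1max, d2max > 0. Define f(d1, d2) = 1 − (1 − Q(d1/(2σ)))·(1 − Q(d2/(2σ))). Then f is strictly decreasing in each argument on (0,∞) × (0,∞), and consequently for all (d1, d2) with 0 < d1 ≤ d1max and 0 < d2 ≤ d2max one has f(d1max, d2max) ≤ f(d1, d2), with equality if and only if (d1, d2) = (d1max, d2max). -/

import Mathlib

/-- The Gaussian tail function `Q(x) = ∫_x^∞ (1/√(2π)) e^{−t²/2} dt`. -/
noncomputable def gaussQ (x : ℝ) : ℝ :=
  ∫ t in Set.Ioi x, (1 / Real.sqrt (2 * Real.pi)) * Real.exp (-t ^ 2 / 2)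

/-- The Gaussian density is integrable. -/
theorem gaussQ_integrable : MeasureTheory.Integrable
    (fun t : ℝ => (1 / Real.sqrt (2 * Real.pi)) * Real.exp (-t ^ 2 / 2)) := by
  have h := (integrable_exp_neg_mul_sq (b := 1 / 2) (by norm_num)).const_mul
    (1 / Real.sqrt (2 * Real.pi))
  refine h.congr (Filter.Eventually.of_forall fun t => ?_)
  simp only
  congr 2
  ring

theorem gaussQ_strictAnti : StrictAnti gaussQ := by
  intro x y hxy
  have h := intervalIntegral.integral_Ioi_sub_Ioi (f := fun t : ℝ =>
    (1 / Real.sqrt (2 * Real.pi)) * Real.exp (-t ^ 2 / 2)) (μ := MeasureTheory.volume)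
    (a := x) (b := y)
    gaussQ_integrable.integrableOn hxy.le
  have hp : 0 < ∫ t in x..y, (1 / Real.sqrt (2 * Real.pi)) * Real.exp (-t ^ 2 / 2) := by
    apply intervalIntegral.intervalIntegral_pos_of_pos
      gaussQ_integrable.intervalIntegrable _ hxy
    intro t
    positivity
  unfold gaussQ
  linarith

theorem gaussQ_zero : gaussQ 0 = 1 / 2 := by
  have h := integral_gaussian_Ioi (1 / 2)
  unfold gaussQ
  rw [MeasureTheory.integral_const_mul]
  have e : ∀ t : ℝ, Real.exp (-t ^ 2 / 2) = Real.exp (-(1 / 2) * t ^ 2) := by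
    intro t
    congr 1
    ring
  simp only [e]
  rw [h, show Real.pi / (1 / 2) = 2 * Real.pi by ring]
  have : Real.sqrt (2 * Real.pi) ≠ 0 := by positivity
  field_simp

/-- The asymptotic orthogonal-waveform error rate `f(d1,d2) = 1 − (1−Q(d1/2σ))(1−Q(d2/2σ))`
is strictly decreasing in each argument on `(0,∞)`, hence is uniquely minimized over
`(0, d1max] × (0, d2max]` at `(d1max, d2max)`. -/
theorem stmt_8 (σ : ℝ) (hσ : 0 < σ) (d1max d2max : ℝ) (h1 : 0 < d1max) (h2 : 0 < d2max) :
    (∀ d2 ∈ Set.Ioi (0 : ℝ),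
      StrictAntiOn (fun d1 : ℝ =>
        1 - (1 - gaussQ (d1 / (2 * σ))) * (1 - gaussQ (d2 / (2 * σ)))) (Set.Ioi 0)) ∧
    (∀ d1 ∈ Set.Ioi (0 : ℝ),
      StrictAntiOn (fun d2 : ℝ =>
        1 - (1 - gaussQ (d1 / (2 * σ))) * (1 - gaussQ (d2 / (2 * σ)))) (Set.Ioi 0)) ∧
    (∀ d1 d2 : ℝ, 0 < d1 → d1 ≤ d1max → 0 < d2 → d2 ≤ d2max →
      ((1 - (1 - gaussQ (d1max / (2 * σ))) * (1 - gaussQ (d2max / (2 * σ))))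
          ≤ 1 - (1 - gaussQ (d1 / (2 * σ))) * (1 - gaussQ (d2 / (2 * σ))) ∧
        ((1 - (1 - gaussQ (d1max / (2 * σ))) * (1 - gaussQ (d2max / (2 * σ))))
            = 1 - (1 - gaussQ (d1 / (2 * σ))) * (1 - gaussQ (d2 / (2 * σ))) ↔
          d1 = d1max ∧ d2 = d2max))) := by
  have hs : 0 < 2 * σ := by positivity
  have hanti : ∀ a b : ℝ, a < b → gaussQ (b / (2 * σ)) < gaussQ (a / (2 * σ)) := fun a b hab =>
    gaussQ_strictAnti (div_lt_div_of_pos_right hab hs)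
  have hpos : ∀ a : ℝ, 0 < a → 0 < 1 - gaussQ (a / (2 * σ)) := by
    intro a ha
    have := hanti 0 a ha
    rw [zero_div, gaussQ_zero] at this
    linarith
  have A : ∀ d2 ∈ Set.Ioi (0 : ℝ),
      StrictAntiOn (fun d1 : ℝ =>
        1 - (1 - gaussQ (d1 / (2 * σ))) * (1 - gaussQ (d2 / (2 * σ)))) (Set.Ioi 0) := by
    intro d2 hd2 a _ b _ hab
    have := mul_lt_mul_of_pos_right (sub_lt_sub_left (hanti a b hab) 1) (hpos d2 hd2)
    simp only
    linarith
  have B : ∀ d1 ∈ Set.Ioi (0 : ℝ),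
      StrictAntiOn (fun d2 : ℝ =>
        1 - (1 - gaussQ (d1 / (2 * σ))) * (1 - gaussQ (d2 / (2 * σ)))) (Set.Ioi 0) := by
    intro d1 hd1 a _ b _ hab
    have := mul_lt_mul_of_pos_left (sub_lt_sub_left (hanti a b hab) 1) (hpos d1 hd1)
    simp only
    linarith
  refine ⟨A, B, ?_⟩
  intro d1 d2 p1 l1 p2 l2
  have a1 := (A d2max h2).antitoneOn p1 h1 l1
  have b1 := (B d1 p1).antitoneOn p2 h2 l2
  refine ⟨a1.trans b1, fun h => ⟨?_, ?_⟩, ?_⟩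
  · by_contra hne
    have := A d2max h2 p1 h1 (lt_of_le_of_ne l1 hne)
    simp only at this
    linarith
  · by_contra hne
    have := B d1 p1 p2 h2 (lt_of_le_of_ne l2 hne)
    simp only at this
    linarith
  · rintro ⟨rfl, rfl⟩
    rfl
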